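/- Let A be a C*-algebra and assume that π : A → B(H) is an irreducible representation of A on an infinite-dimensional Hilbert space H. Then the Lebesgue decomposition of positive functionals over A is not unique; indeed, there exist nonzero positive functionals f, g, p on A with p ≤ f, f absolutely continuous with respect to g, and p singular to g. -/

import Mathlib

open scoped ComplexOrder

section CStarDefs

variable {A : Type} [NonUnitalCStarAlgebra A]

/-- A linear functional on a C⋆-algebra is positive if `0 ≤ f (a⋆ * a)` for every `a`. -/
def IsPosFnC (f : A →ₗ[ℂ] ℂ) : Prop := ∀ a : A, 0 ≤ f (star a * a)

/-- Order on positive functionals: `f ≤ g` iff `g - f` is positive. -/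
def FnLEC (f g : A →ₗ[ℂ] ℂ) : Prop := IsPosFnC (g - f)

/-- Absolute continuity `f ≪ g` for positive functionals on a C⋆-algebra: `f` is the
pointwise limit of an increasing sequence of positive functionals `fₙ` with `fₙ ≤ αₙ • g`
for some positive reals `αₙ`. -/
def AbsContC (f g : A →ₗ[ℂ] ℂ) : Prop :=
  ∃ (fn : ℕ → (A →ₗ[ℂ] ℂ)) (α : ℕ → ℝ),
    (∀ n, IsPosFnC (fn n)) ∧
    (∀ n, 0 < α n) ∧
    (∀ n, FnLEC (fn n) (fn (n + 1))) ∧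
    (∀ n, FnLEC (fn n) (((α n : ℂ)) • g)) ∧
    (∀ a : A, Filter.Tendsto (fun n => fn n a) Filter.atTop (nhds (f a)))

/-- Singularity `f ⊥ g`: the only positive functional dominated by both `f` and `g`
is `0`. -/
def SingularC (f g : A →ₗ[ℂ] ℂ) : Prop :=
  ∀ p : A →ₗ[ℂ] ℂ, IsPosFnC p → FnLEC p f → FnLEC p g → p = 0

/-- `f = fr + fs` is a Lebesgue decomposition of `f` with respect to `g`. -/
def IsLebDecompC (f g fr fs : A →ₗ[ℂ] ℂ) : Prop :=
  IsPosFnC fr ∧ IsPosFnC fs ∧ f = fr + fs ∧ AbsContC fr g ∧ SingularC fs g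

/-- The Lebesgue decomposition of `f` with respect to `g` is unique. -/
def LebDecompUniqueForC (f g : A →ₗ[ℂ] ℂ) : Prop :=
  ∀ fr fs fr' fs' : A →ₗ[ℂ] ℂ, IsLebDecompC f g fr fs → IsLebDecompC f g fr' fs' →
    fr = fr' ∧ fs = fs'

end CStarDefs

/-- The Lebesgue decomposition of positive functionals over the C⋆-algebra `A` is unique. -/
def LebDecompUniqueC (A : Type) [NonUnitalCStarAlgebra A] : Prop :=
  ∀ f g : A →ₗ[ℂ] ℂ, IsPosFnC f → IsPosFnC g → LebDecompUniqueForC f g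

/-- An irreducible representation of a C⋆-algebra: a nonzero `⋆`-representation whose only
closed invariant subspaces are `{0}` and `H`. -/
def IsIrredRepC {A : Type} [NonUnitalCStarAlgebra A]
    {H : Type} [NormedAddCommGroup H] [InnerProductSpace ℂ H] [CompleteSpace H]
    (π : A →⋆ₙₐ[ℂ] (H →L[ℂ] H)) : Prop :=
  π ≠ 0 ∧
    ∀ S : Submodule ℂ H, IsClosed (S : Set H) →
      (∀ a : A, ∀ x ∈ S, π a x ∈ S) → S = ⊥ ∨ S = ⊤


open scoped InnerProductSpace

section Helpers

variable {A : Type} [NonUnitalCStarAlgebra A]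

lemma fn_eq_zero_of_sq (q : A →ₗ[ℂ] ℂ) (h : ∀ a : A, q (star a * a) = 0) : q = 0 := by
  let _ := CStarAlgebra.spectralOrder A
  have _ := CStarAlgebra.spectralOrderedRing A
  have h1 : (⊤ : Submodule ℂ A) ≤ LinearMap.ker q := by
    rw [← CStarAlgebra.span_nonneg, Submodule.span_le]
    intro a ha
    obtain ⟨b, rfl⟩ := CStarAlgebra.nonneg_iff_eq_star_mul_self.1 (show 0 ≤ a from ha)
    exact h b
  ext a
  exact h1 (Submodule.mem_top (x := a))

lemma posFn_symm (q : A →ₗ[ℂ] ℂ) (hq : IsPosFnC q) (a b : A) :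
    (starRingEnd ℂ) (q (star b * a)) = q (star a * b) := by
  have ha := (Complex.le_def.1 (hq a)).2
  have hb := (Complex.le_def.1 (hq b)).2
  have h1 := (Complex.le_def.1 (hq (a + b))).2
  have h2 := (Complex.le_def.1 (hq (a + Complex.I • b))).2
  simp [star_add, add_mul, mul_add, mul_smul_comm, smul_mul_assoc] at ha hb h1 h2
  apply Complex.ext
  · simp; linarith
  · simp; linarith

lemma posFn_cs (q : A →ₗ[ℂ] ℂ) (hq : IsPosFnC q) (a b : A) :
    ‖q (star a * b)‖ ^ 2 ≤ (q (star a * a)).re * (q (star b * b)).re := by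
  let c : PreInnerProductSpace.Core ℂ A :=
    { inner := fun a b => q (star a * b)
      conj_inner_symm := fun x y => posFn_symm q hq x y
      re_inner_nonneg := fun x => (Complex.le_def.1 (hq x)).1
      add_left := fun x y z => by simp [star_add, add_mul]
      smul_left := fun x y r => by simp [star_smul, smul_mul_assoc] }
  have := @InnerProductSpace.Core.inner_mul_inner_self_le ℂ A _ _ _ c a b
  change ‖q (star a * b)‖ * ‖q (star b * a)‖ ≤ (q (star a * a)).re * (q (star b * b)).re at this
  rw [← posFn_symm q hq a b] at *
  simpa [sq] using this

lemma fn_le_zero {q : A →ₗ[ℂ] ℂ} (hq : IsPosFnC q) (h : FnLEC q 0) : q = 0 := by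
  apply fn_eq_zero_of_sq
  intro a
  have h1 := hq a
  have h2 := h a
  simp only [LinearMap.sub_apply, LinearMap.zero_apply, zero_sub] at h2
  exact le_antisymm (neg_nonneg.1 h2) h1

variable {H : Type} [NormedAddCommGroup H] [InnerProductSpace ℂ H] [CompleteSpace H]

lemma rep_adj (π : A →⋆ₙₐ[ℂ] (H →L[ℂ] H)) (a : A) (x y : H) :
    ⟪π (star a) x, y⟫_ℂ = ⟪x, π a y⟫_ℂ := by
  rw [map_star, ContinuousLinearMap.star_eq_adjoint, ContinuousLinearMap.adjoint_inner_left]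

lemma rep_nondeg {π : A →⋆ₙₐ[ℂ] (H →L[ℂ] H)} (hπ : IsIrredRepC π) (x : H)
    (hx : ∀ a, π a x = 0) : x = 0 := by
  let S : Submodule ℂ H := ⨅ a : A, LinearMap.ker (π a).toLinearMap
  have hS : ∀ y, y ∈ S ↔ ∀ a, π a y = 0 := by intro y; simp [S, Submodule.mem_iInf]
  have hcl : IsClosed (S : Set H) := by
    have : (S : Set H) = ⋂ a : A, {y | π a y = 0} := by
      ext y; simp only [SetLike.mem_coe, hS, Set.mem_iInter, Set.mem_setOf_eq]
    rw [this]
    exact isClosed_iInter fun a => isClosed_eq (π a).continuous continuous_const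
  have hin : ∀ a : A, ∀ y ∈ S, π a y ∈ S := by
    intro a y hy
    rw [hS] at hy ⊢
    intro b
    simp [hy a]
  rcases hπ.2 S hcl hin with h | h
  · have : x ∈ S := (hS x).2 hx
    rw [h] at this; simpa using this
  · exfalso
    apply hπ.1
    ext a y
    have : y ∈ S := h ▸ Submodule.mem_top
    simpa using (hS y).1 this a

/-- orbit map -/
noncomputable def orb (π : A →⋆ₙₐ[ℂ] (H →L[ℂ] H)) (x : H) : A →ₗ[ℂ] H where
  toFun a := π a x
  map_add' a b := by simp
  map_smul' r a := by simp

lemma orb_dense {π : A →⋆ₙₐ[ℂ] (H →L[ℂ] H)} (hπ : IsIrredRepC π) {x : H} (hx : x ≠ 0) :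
    DenseRange (orb π x) := by
  let S := (LinearMap.range (orb π x)).topologicalClosure
  have hin : ∀ a : A, ∀ y ∈ S, π a y ∈ S := by
    intro a y hy
    have h2 : Set.MapsTo (π a) (LinearMap.range (orb π x) : Set H)
        (LinearMap.range (orb π x) : Set H) := by
      rintro _ ⟨b, rfl⟩
      exact ⟨a * b, by simp [orb]⟩
    exact h2.closure (π a).continuous hy
  rcases hπ.2 S (Submodule.isClosed_topologicalClosure _) hin with h | h
  · exfalso
    apply hx
    apply rep_nondeg hπ
    intro a
    have : π a x ∈ S := Submodule.le_topologicalClosure _ ⟨a, rfl⟩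
    rw [h] at this; simpa using this
  · have := (Submodule.dense_iff_topologicalClosure_eq_top).2 h
    rwa [LinearMap.coe_range] at this

lemma schur_sa {π : A →⋆ₙₐ[ℂ] (H →L[ℂ] H)} (hπ : IsIrredRepC π) (T : H →L[ℂ] H)
    (hT : IsSelfAdjoint T) (hc : ∀ a, Commute T (π a)) :
    ∃ s : ℂ, T = s • (1 : H →L[ℂ] H) := by
  have hnt : Nontrivial H := by
    by_contra hn
    rw [not_nontrivial_iff_subsingleton] at hn
    exact hπ.1 (by ext a y; exact Subsingleton.elim _ _)
  have key : ∀ l ∈ spectrum ℝ T, ∀ m ∈ spectrum ℝ T, ¬ l < m := by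
    intro l hl m hm hlm
    let k := (l + m) / 2
    let F : ℝ → ℝ := fun x => max (x - k) 0
    let G : ℝ → ℝ := fun x => max (k - x) 0
    have hF : Continuous F := by fun_prop
    have hG : Continuous G := by fun_prop
    have hFG : cfc F T * cfc G T = 0 := by
      rw [← cfc_mul F G T hF.continuousOn hG.continuousOn]
      have : (fun x => F x * G x) = fun _ => 0 := by
        ext x
        simp only [F, G]
        rcases le_total x k with h | h
        · rw [max_eq_right (by linarith : x - k ≤ 0), zero_mul]
        · rw [max_eq_right (by linarith : k - x ≤ 0), mul_zero]
      rw [this]; simp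
    have hF0 : cfc F T ≠ 0 := by
      intro h0
      have h1 : F m ∈ spectrum ℝ (cfc F T) := by
        rw [cfc_map_spectrum F T hT hF.continuousOn]; exact ⟨m, hm, rfl⟩
      rw [h0, spectrum.zero_eq] at h1
      have : F m = 0 := h1
      simp only [F, k, max_eq_right_iff] at this
      linarith
    have hG0 : cfc G T ≠ 0 := by
      intro h0
      have h1 : G l ∈ spectrum ℝ (cfc G T) := by
        rw [cfc_map_spectrum G T hT hG.continuousOn]; exact ⟨l, hl, rfl⟩
      rw [h0, spectrum.zero_eq] at h1
      have : G l = 0 := h1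
      simp only [G, k, max_eq_right_iff] at this
      linarith
    have hcF : ∀ a, Commute (cfc F T) (π a) := fun a => (hc a).cfc_real F
    have hin : ∀ a : A, ∀ y ∈ LinearMap.ker (cfc F T).toLinearMap,
        π a y ∈ LinearMap.ker (cfc F T).toLinearMap := by
      intro a y hy
      have := congrArg (fun S : H →L[ℂ] H => S y) (hcF a).eq
      have hy' : cfc F T y = 0 := by simpa using hy
      simpa [hy'] using this
    rcases hπ.2 (LinearMap.ker (cfc F T).toLinearMap) (cfc F T).isClosed_ker hin with h | h
    · apply hG0
      ext y
      have : cfc G T y ∈ LinearMap.ker (cfc F T).toLinearMap := by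
        have := congrArg (fun S : H →L[ℂ] H => S y) hFG
        simpa using this
      rw [h] at this
      simpa using this
    · apply hF0
      ext y
      have : y ∈ LinearMap.ker (cfc F T).toLinearMap := h ▸ Submodule.mem_top
      simpa using this
  have hne : (spectrum ℝ T).Nonempty := ContinuousFunctionalCalculus.spectrum_nonempty T hT
  obtain ⟨l, hl⟩ := hne
  refine ⟨(l : ℂ), ?_⟩
  have h1 : cfc (fun x : ℝ => x) T = cfc (fun _ => l) T := by
    apply cfc_congr
    intro x hx
    exact le_antisymm (not_lt.1 (key l hl x hx)) (not_lt.1 (key x hx l hl))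
  rw [cfc_id' ℝ T, cfc_const l T] at h1
  conv_lhs => rw [h1]
  ext y
  simp [Algebra.algebraMap_eq_smul_one]

lemma schur {π : A →⋆ₙₐ[ℂ] (H →L[ℂ] H)} (hπ : IsIrredRepC π) (T : H →L[ℂ] H)
    (hc : ∀ a, Commute T (π a)) :
    ∃ s : ℂ, T = s • (1 : H →L[ℂ] H) := by
  have hc' : ∀ a, Commute (star T) (π a) := by
    intro a
    have := (hc (star a)).star_star
    rwa [← map_star, star_star] at this
  obtain ⟨s, hs⟩ := schur_sa hπ (T + star T) (IsSelfAdjoint.add_star_self T)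
    (fun a => (hc a).add_left (hc' a))
  obtain ⟨t, ht⟩ := schur_sa hπ (Complex.I • (T - star T))
    (by simp [IsSelfAdjoint, ← smul_neg]) (fun a => ((hc a).sub_left (hc' a)).smul_left _)
  refine ⟨(s - Complex.I * t) / 2, ?_⟩
  have h3 : T - star T = (-Complex.I * t) • (1 : H →L[ℂ] H) := by
    rw [mul_smul, ← ht, smul_smul]; simp
  have h4 : (2 : ℂ) • T = (T + star T) + (T - star T) := by rw [two_smul]; abel
  rw [hs, h3, ← add_smul] at h4
  have h5 : T = (2 : ℂ)⁻¹ • ((2 : ℂ) • T) := by rw [smul_smul]; simp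
  rw [h5, h4, smul_smul]
  congr 1
  ring

lemma intertw_scalar {π : A →⋆ₙₐ[ℂ] (H →L[ℂ] H)} (hπ : IsIrredRepC π) {x : H} (hx : x ≠ 0)
    (σ : A →ₗ[ℂ] H) (hσ : ∀ a, ‖σ a‖ ≤ ‖π a x‖) (hm : ∀ c a, σ (c * a) = π c (σ a)) :
    ∃ s : ℂ, ∀ a, σ a = s • π a x := by
  have hd := orb_dense hπ hx
  let T : H →L[ℂ] H := σ.extendOfNorm (orb π x)
  have hT : ∀ a, T (π a x) = σ a := fun a =>
    LinearMap.extendOfNorm_eq hd ⟨1, fun a => by simpa [orb] using hσ a⟩ a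
  obtain ⟨s, hs⟩ := schur hπ T (by
    intro c
    have : (fun y => T (π c y)) = fun y => π c (T y) := by
      apply hd.equalizer (T.continuous.comp (π c).continuous) ((π c).continuous.comp T.continuous)
      ext a
      change T (π c (π a x)) = π c (T (π a x))
      rw [hT, ← hm, ← hT, map_mul]; rfl
    ext y
    exact congrFun this y)
  refine ⟨s, fun a => ?_⟩
  rw [← hT, hs]; simp

lemma rn {K : Type} [NormedAddCommGroup K] [InnerProductSpace ℂ K] [CompleteSpace K]
    (J : A →ₗ[ℂ] K) (ρ : A → K → K) (hJ : ∀ c b, ρ c (J b) = J (c * b))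
    (hadj : ∀ c x y, ⟪ρ (star c) x, y⟫_ℂ = ⟪x, ρ c y⟫_ℂ)
    (q : A →ₗ[ℂ] ℂ) (N : A → ℝ) (hN : ∀ a, 0 ≤ N a)
    (hq : ∀ a b, ‖q (star a * b)‖ ≤ N a * ‖J b‖) :
    ∃ τ : A →ₗ[ℂ] K, (∀ a b, ⟪τ a, J b⟫_ℂ = q (star a * b)) ∧ (∀ a, ‖τ a‖ ≤ N a) ∧
      ∀ c a, τ (c * a) = ρ c (τ a) := by
  let M := (LinearMap.range J).topologicalClosure
  have hMc : IsClosed (M : Set K) := Submodule.isClosed_topologicalClosure _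
  have : CompleteSpace M := hMc.completeSpace_coe
  have hJM : ∀ b, J b ∈ M := fun b => Submodule.le_topologicalClosure _ ⟨b, rfl⟩
  let J' : A →ₗ[ℂ] M := J.codRestrict M hJM
  have hd : DenseRange J' := by
    intro y
    rw [Metric.mem_closure_range_iff]
    intro ε hε
    obtain ⟨z, ⟨b, rfl⟩, hb⟩ := Metric.mem_closure_iff.1 y.2 ε hε
    exact ⟨b, hb⟩
  let ell : A → (A →ₗ[ℂ] ℂ) := fun a => q ∘ₗ LinearMap.mulLeft ℂ (star a)
  have hell : ∀ a b, ‖ell a b‖ ≤ N a * ‖J' b‖ := fun a b => hq a b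
  let τ0 : A → M := fun a => (InnerProductSpace.toDual ℂ M).symm ((ell a).extendOfNorm J')
  have h0 : ∀ a b, ⟪(τ0 a : K), J b⟫_ℂ = q (star a * b) := by
    intro a b
    have h1 : ⟪τ0 a, J' b⟫_ℂ = (ell a).extendOfNorm J' (J' b) :=
      InnerProductSpace.toDual_symm_apply
    rw [LinearMap.extendOfNorm_eq hd ⟨_, hell a⟩] at h1
    exact h1
  have huniq : ∀ x ∈ M, ∀ y ∈ M, (∀ b, ⟪x, J b⟫_ℂ = ⟪y, J b⟫_ℂ) → x = y := by
    intro x hx y hy h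
    have h1 : x - y ∈ (LinearMap.range J)ᗮ := by
      rw [Submodule.mem_orthogonal']
      rintro _ ⟨b, rfl⟩
      rw [inner_sub_left, h, sub_self]
    rw [← Submodule.orthogonal_closure] at h1
    have h2 : x - y ∈ M := M.sub_mem hx hy
    have := (Submodule.mem_orthogonal _ _).1 h1 _ h2
    exact sub_eq_zero.1 (inner_self_eq_zero.1 this)
  have hMinv : ∀ c, ∀ x ∈ M, ρ c x ∈ M := by
    intro c x hx
    have hM : M = (LinearMap.range J)ᗮᗮ := (Submodule.orthogonal_orthogonal_eq_closure _).symm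
    rw [hM, Submodule.mem_orthogonal]
    intro y hy
    rw [← hadj]
    rw [hM, Submodule.mem_orthogonal] at hx
    apply hx
    rw [Submodule.mem_orthogonal']
    rintro _ ⟨b, rfl⟩
    rw [hadj, hJ]
    exact (Submodule.mem_orthogonal' _ _).1 hy _ ⟨_, rfl⟩
  let τ : A →ₗ[ℂ] K :=
    { toFun := fun a => τ0 a
      map_add' := fun a b => by
        apply huniq _ (τ0 _).2 _ (M.add_mem (τ0 _).2 (τ0 _).2)
        intro c
        rw [inner_add_left, h0, h0, h0, star_add, add_mul, map_add]
      map_smul' := fun r a => by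
        apply huniq _ (τ0 _).2 _ (M.smul_mem _ (τ0 _).2)
        intro c
        simp [inner_smul_left, h0, smul_mul_assoc, mul_comm] }
  refine ⟨τ, h0, ?_, ?_⟩
  · intro a
    change ‖τ0 a‖ ≤ N a
    simp only [τ0, LinearIsometryEquiv.norm_map]
    exact LinearMap.opNorm_extendOfNorm_le hd (hN a) (hell a)
  · intro c a
    apply huniq _ (τ0 _).2 _ (hMinv c _ (τ0 _).2)
    intro b
    change ⟪(τ0 _ : K), J b⟫_ℂ = ⟪ρ c (τ0 _ : K), J b⟫_ℂ
    have h2 := hadj (star c) (τ0 a : K) (J b)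
    rw [star_star] at h2
    rw [h2, hJ, h0, h0, star_mul, mul_assoc]

end Helpers

section Main

variable {A : Type} [NonUnitalCStarAlgebra A]
variable {H : Type} [NormedAddCommGroup H] [InnerProductSpace ℂ H] [CompleteSpace H]

/-- vector functional -/
noncomputable def om (π : A →⋆ₙₐ[ℂ] (H →L[ℂ] H)) (x : H) : A →ₗ[ℂ] ℂ where
  toFun a := ⟪x, π a x⟫_ℂ
  map_add' a b := by simp [inner_add_right]
  map_smul' r a := by simp [inner_smul_right]

lemma rep_sq (π : A →⋆ₙₐ[ℂ] (H →L[ℂ] H)) (x y : H) (a b : A) :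
    ⟪x, π (star a * b) y⟫_ℂ = ⟪π a x, π b y⟫_ℂ := by
  rw [map_mul, ContinuousLinearMap.mul_apply, ← rep_adj, star_star]

lemma om_sq (π : A →⋆ₙₐ[ℂ] (H →L[ℂ] H)) (x : H) (a : A) :
    om π x (star a * a) = ((‖π a x‖ ^ 2 : ℝ) : ℂ) := by
  change ⟪x, π (star a * a) x⟫_ℂ = _
  rw [rep_sq, inner_self_eq_norm_sq_to_K]
  norm_cast

lemma om_pos (π : A →⋆ₙₐ[ℂ] (H →L[ℂ] H)) (x : H) : IsPosFnC (om π x) := by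
  intro a
  rw [om_sq]
  exact Complex.zero_le_real.2 (by positivity)

lemma norm_om_le (π : A →⋆ₙₐ[ℂ] (H →L[ℂ] H)) {x : H} (hx : ‖x‖ = 1) (a : A) :
    ‖om π x a‖ ≤ ‖π a‖ := by
  refine (norm_inner_le_norm _ _).trans ?_
  rw [hx, one_mul]
  simpa [hx] using (π a).le_opNorm x

lemma W_summable (π : A →⋆ₙₐ[ℂ] (H →L[ℂ] H)) {e : ℕ → H} (he : Orthonormal ℂ e)
    {w : ℕ → ℝ} (hw : Summable w) (hw0 : ∀ k, 0 < w k) (a : A) :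
    Summable fun k => (w k : ℂ) * om π (e k) a := by
  refine Summable.of_norm_bounded (hw.mul_right ‖π a‖) fun k => ?_
  rw [norm_mul, Complex.norm_real, Real.norm_of_nonneg (hw0 k).le]
  exact mul_le_mul_of_nonneg_left (norm_om_le π (he.1 k) a) (hw0 k).le

/-- weighted sum of vector functionals -/
noncomputable def wsum (π : A →⋆ₙₐ[ℂ] (H →L[ℂ] H)) {e : ℕ → H} (he : Orthonormal ℂ e)
    {w : ℕ → ℝ} (hw : Summable w) (hw0 : ∀ k, 0 < w k) : A →ₗ[ℂ] ℂ where
  toFun a := ∑' k, (w k : ℂ) * om π (e k) a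
  map_add' a b := by
    rw [← (W_summable π he hw hw0 a).tsum_add (W_summable π he hw hw0 b)]
    simp [mul_add]
  map_smul' r a := by
    rw [RingHom.id_apply, smul_eq_mul, ← tsum_mul_left]
    congr 1
    ext k
    simp only [map_smul, smul_eq_mul]
    ring

lemma wsum_hasSum (π : A →⋆ₙₐ[ℂ] (H →L[ℂ] H)) {e : ℕ → H} (he : Orthonormal ℂ e)
    {w : ℕ → ℝ} (hw : Summable w) (hw0 : ∀ k, 0 < w k) (a : A) :
    HasSum (fun k => (w k : ℂ) * om π (e k) a) (wsum π he hw hw0 a) :=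
  (W_summable π he hw hw0 a).hasSum

lemma wsum_pos (π : A →⋆ₙₐ[ℂ] (H →L[ℂ] H)) {e : ℕ → H} (he : Orthonormal ℂ e)
    {w : ℕ → ℝ} (hw : Summable w) (hw0 : ∀ k, 0 < w k) : IsPosFnC (wsum π he hw hw0) := by
  intro a
  exact (wsum_hasSum π he hw hw0 _).nonneg fun k =>
    mul_nonneg (Complex.zero_le_real.2 (hw0 k).le) (om_pos π _ a)

lemma memc {c : ℕ → ℝ} (h2 : Summable fun k => c k ^ 2) : Memℓp c 2 := by
  apply memℓp_gen
  simpa using h2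

/-- diagonal action on the Hilbert sum -/
noncomputable def rhoK (π : A →⋆ₙₐ[ℂ] (H →L[ℂ] H)) (a : A) (x : lp (fun _ : ℕ => H) 2) :
    lp (fun _ : ℕ => H) 2 :=
  ⟨fun n => π a (x n), ((lp.memℓp x).norm.const_mul ‖π a‖).mono fun n => (π a).le_opNorm _⟩

/-- the orbit map on the Hilbert sum -/
noncomputable def JK (π : A →⋆ₙₐ[ℂ] (H →L[ℂ] H)) {e : ℕ → H} (he : Orthonormal ℂ e)
    {c : ℕ → ℝ} (hc : ∀ k, 0 < c k) (h2 : Summable fun k => c k ^ 2) :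
    A →ₗ[ℂ] lp (fun _ : ℕ => H) 2 where
  toFun a := ⟨fun n => (c n : ℂ) • π a (e n), ((memc h2).const_mul ‖π a‖).mono fun n => by
    rw [norm_smul, Complex.norm_real, Real.norm_of_nonneg (hc n).le, mul_comm]
    refine mul_le_mul_of_nonneg_right ?_ (hc n).le
    simpa [he.1 n] using (π a).le_opNorm (e n)⟩
  map_add' a b := by
    ext n
    change (c n : ℂ) • π (a + b) (e n) = (c n : ℂ) • π a (e n) + (c n : ℂ) • π b (e n)
    rw [map_add, add_apply, smul_add]
  map_smul' r a := by
    ext n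
    change (c n : ℂ) • π (r • a) (e n) = r • (c n : ℂ) • π a (e n)
    rw [map_smul, smul_apply, smul_comm]

lemma singular_main {π : A →⋆ₙₐ[ℂ] (H →L[ℂ] H)} (hπ : IsIrredRepC π)
    {e : ℕ → H} (he : Orthonormal ℂ e) {c : ℕ → ℝ} (hc : ∀ k, 0 < c k)
    (hs : Summable c) (h2 : Summable fun k => c k ^ 2) (hc2 : ∀ k, 0 < c k ^ 2)
    {ξ : H} (hξ : HasSum (fun k => (c k : ℂ) • e k) ξ) (hξ0 : ξ ≠ 0) :
    SingularC (om π ξ) (wsum π he h2 hc2) := by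
  intro q hq hqp hqg
  have bp : ∀ a, (q (star a * a)).re ≤ ‖π a ξ‖ ^ 2 := by
    intro a
    have := (Complex.le_def.1 (hqp a)).1
    rw [LinearMap.sub_apply, om_sq] at this
    rw [Complex.sub_re, Complex.ofReal_re, Complex.zero_re] at this
    linarith
  let J := JK π he hc h2
  have hJJ : ∀ a, wsum π he h2 hc2 (star a * a) = ((‖J a‖ ^ 2 : ℝ) : ℂ) := by
    intro a
    have h1 : ⟪J a, J a⟫_ℂ = ((‖J a‖ ^ 2 : ℝ) : ℂ) := by
      rw [inner_self_eq_norm_sq_to_K]; norm_cast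
    rw [← h1, lp.inner_eq_tsum]
    change ∑' k, _ = _
    congr 1
    ext k
    change _ = ⟪(c k : ℂ) • π a (e k), (c k : ℂ) • π a (e k)⟫_ℂ
    rw [om_sq, inner_smul_left, inner_smul_right, inner_self_eq_norm_sq_to_K]
    simp
    ring
  have bg : ∀ a, (q (star a * a)).re ≤ ‖J a‖ ^ 2 := by
    intro a
    have := (Complex.le_def.1 (hqg a)).1
    rw [LinearMap.sub_apply, hJJ] at this
    rw [Complex.sub_re, Complex.ofReal_re, Complex.zero_re] at this
    linarith
  have q0 : ∀ a, 0 ≤ (q (star a * a)).re := fun a => (Complex.le_def.1 (hq a)).1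
  have b1 : ∀ a b, ‖q (star a * b)‖ ≤ ‖π a ξ‖ * ‖orb π ξ b‖ := by
    intro a b
    refine le_of_sq_le_sq ?_ (by positivity)
    rw [mul_pow]
    exact (posFn_cs q hq a b).trans (mul_le_mul (bp a) (bp b) (q0 b) (by positivity))
  have b2 : ∀ a b, ‖q (star a * b)‖ ≤ ‖π a ξ‖ * ‖J b‖ := by
    intro a b
    refine le_of_sq_le_sq ?_ (by positivity)
    rw [mul_pow]
    exact (posFn_cs q hq a b).trans (mul_le_mul (bp a) (bg b) (q0 b) (by positivity))
  -- first representation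
  obtain ⟨τ, hτ1, hτ2, hτ3⟩ := rn (orb π ξ) (fun a x => π a x) (fun c b => by simp [orb])
    (fun c x y => rep_adj π c x y) q (fun a => ‖π a ξ‖) (fun a => norm_nonneg _) b1
  obtain ⟨t, ht⟩ := intertw_scalar hπ hξ0 τ hτ2 hτ3
  -- second representation
  obtain ⟨τ', hτ1', hτ2', hτ3'⟩ := rn J (rhoK π)
    (fun c b => by ext n; simp [rhoK, J, JK])
    (fun c x y => by
      rw [lp.inner_eq_tsum, lp.inner_eq_tsum]
      congr 1; ext n
      exact rep_adj π c (x n) (y n)) q (fun a => ‖π a ξ‖) (fun a => norm_nonneg _) b2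
  have hsc : ∀ n, ∃ s : ℂ, ∀ a, (τ' a) n = s • π a ξ := by
    intro n
    let σ : A →ₗ[ℂ] H :=
      { toFun := fun a => (τ' a) n
        map_add' := fun a b => by simp
        map_smul' := fun r a => by simp }
    exact intertw_scalar hπ hξ0 σ
      (fun a => (lp.norm_apply_le_norm (by norm_num) (τ' a) n).trans (hτ2' a))
      (fun c a => by
        change (τ' (c * a)) n = π c ((τ' a) n)
        rw [hτ3']; rfl)
  choose s hs' using hsc
  obtain ⟨a0, ha0⟩ : ∃ a, π a ξ ≠ 0 := by
    by_contra! h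
    exact hξ0 (rep_nondeg hπ ξ h)
  have hs2 : Summable fun n => ‖s n‖ ^ 2 := by
    have h1 : Summable fun n => ‖(τ' a0) n‖ ^ 2 := by
      have := (memℓp_gen_iff (by norm_num)).1 (lp.memℓp (τ' a0))
      simpa using this
    simp_rw [hs', norm_smul, mul_pow] at h1
    exact (summable_mul_right_iff (by positivity)).1 h1
  have hs0 : Filter.Tendsto s Filter.atTop (nhds 0) := by
    rw [tendsto_zero_iff_norm_tendsto_zero]
    have := (hs2.tendsto_atTop_zero).sqrt
    simpa [Real.sqrt_sq] using this
  obtain ⟨B, hB⟩ : ∃ B, ∀ n, ‖s n‖ ≤ B := by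
    obtain ⟨B, hB⟩ := (Metric.isBounded_range_of_tendsto s hs0).exists_norm_le
    exact ⟨B, fun n => hB _ ⟨n, rfl⟩⟩
  have hη : Summable fun n => ((starRingEnd ℂ) (s n) * (c n : ℂ)) • e n := by
    refine Summable.of_norm_bounded (hs.mul_left B) fun n => ?_
    rw [norm_smul, norm_mul, he.1 n, Complex.norm_real, Real.norm_of_nonneg (hc n).le, mul_one,
      RCLike.norm_conj]
    exact mul_le_mul_of_nonneg_right (hB n) (hc n).le
  obtain ⟨η, hη⟩ := hη
  have hq1 : ∀ a b, q (star a * b) = ⟪π a ξ, π b ((starRingEnd ℂ) t • ξ)⟫_ℂ := by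
    intro a b
    rw [← hτ1, ht, inner_smul_left, map_smul, inner_smul_right]; rfl
  have hq2 : ∀ a b, q (star a * b) = ⟪π a ξ, π b η⟫_ℂ := by
    intro a b
    rw [← hτ1']
    have h1 := lp.hasSum_inner (𝕜 := ℂ) (τ' a) (J b)
    have h3 : HasSum _ ⟪π a ξ, π b η⟫_ℂ := ((innerSL ℂ (π a ξ)).comp (π b)).hasSum hη
    refine h1.unique ?_
    refine Eq.mp (congrArg (fun F => HasSum F _) (funext fun n => ?_)) h3
    symm
    rw [hs']
    change ⟪s n • π a ξ, (c n : ℂ) • π b (e n)⟫_ℂ =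
      ⟪π a ξ, π b (((starRingEnd ℂ) (s n) * (c n : ℂ)) • e n)⟫_ℂ
    rw [map_smul, inner_smul_left, inner_smul_right, inner_smul_right, mul_assoc]
  have hηξ : η = (starRingEnd ℂ) t • ξ := by
    rw [← sub_eq_zero]
    apply rep_nondeg hπ
    intro b
    rw [map_sub]
    refine (orb_dense hπ hξ0).eq_zero_of_inner_right (𝕜 := ℂ) ?_
    intro a
    change ⟪π a ξ, _⟫_ℂ = 0
    rw [inner_sub_right, ← hq1, ← hq2, sub_self]
  have hst : ∀ n, s n = t := by
    intro n
    have g1 := (innerSL ℂ (e n)).hasSum hη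
    have g2 := (innerSL ℂ (e n)).hasSum hξ
    have ho : ∀ m, ⟪e n, e m⟫_ℂ = if n = m then 1 else 0 := fun m => orthonormal_iff_ite.1 he n m
    have e1 : ⟪e n, η⟫_ℂ = (starRingEnd ℂ) (s n) * (c n : ℂ) := by
      refine g1.unique ?_
      convert hasSum_single n ?_ using 1
      · simp [ho, inner_smul_right, he.1 n]
      · intro m hm
        simp [inner_smul_right, ho, hm.symm]
    have e2 : ⟪e n, ξ⟫_ℂ = (c n : ℂ) := by
      refine g2.unique ?_
      convert hasSum_single n ?_ using 1
      · simp [ho, inner_smul_right, he.1 n]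
      · intro m hm
        simp [inner_smul_right, ho, hm.symm]
    rw [hηξ, inner_smul_right, e2] at e1
    have hcn : (c n : ℂ) ≠ 0 := Complex.ofReal_ne_zero.2 (hc n).ne'
    exact ((starRingEnd ℂ).injective (mul_right_cancel₀ hcn e1)).symm
  have ht0 : t = 0 := by
    have : s = fun _ => t := funext hst
    rw [this] at hs0
    exact tendsto_const_nhds_iff.1 hs0
  apply fn_eq_zero_of_sq
  intro a
  rw [hq1, ht0]
  simp

end Main

lemma titu (X Y s c : ℝ) (hs : 0 < s) (hc : 0 < c) :
    (s + c)⁻¹ * (X + c * Y) ^ 2 ≤ s⁻¹ * X ^ 2 + c * Y ^ 2 := by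
  have h : s⁻¹ * X ^ 2 + c * Y ^ 2 - (s + c)⁻¹ * (X + c * Y) ^ 2
      = c / (s * (s + c)) * (X - s * Y) ^ 2 := by
    field_simp
    ring
  have : 0 ≤ c / (s * (s + c)) * (X - s * Y) ^ 2 := by positivity
  linarith

/-- **Theorem 2.4**: if a C⋆-algebra `A` admits an irreducible representation on an
infinite-dimensional Hilbert space, then the Lebesgue decomposition of positive functionals
over `A` is not unique; indeed there are nonzero positive functionals `f, g, p` on `A` with
`p ≤ f ≪ g` and `p ⊥ g`. -/
theorem not_lebesgue_unique_of_infinite_dimensional_irred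
    {A : Type} [NonUnitalCStarAlgebra A]
    {H : Type} [NormedAddCommGroup H] [InnerProductSpace ℂ H] [CompleteSpace H]
    (π : A →⋆ₙₐ[ℂ] (H →L[ℂ] H)) (hπ : IsIrredRepC π)
    (hH : ¬ FiniteDimensional ℂ H) :
    ¬ LebDecompUniqueC A ∧
      ∃ f g p : A →ₗ[ℂ] ℂ,
        f ≠ 0 ∧ g ≠ 0 ∧ p ≠ 0 ∧
        IsPosFnC f ∧ IsPosFnC g ∧ IsPosFnC p ∧
        FnLEC p f ∧ AbsContC f g ∧ SingularC p g := by
  -- an orthonormal sequence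
  obtain ⟨e, he⟩ : ∃ e : ℕ → H, Orthonormal ℂ e := by
    obtain ⟨w, b, hb⟩ := exists_hilbertBasis ℂ H
    have hinf : Infinite w := by
      by_contra hf
      rw [not_infinite_iff_finite] at hf
      have := Fintype.ofFinite w
      exact hH (Module.Basis.finiteDimensional_of_finite b.toOrthonormalBasis.toBasis)
    exact ⟨fun n => b (Infinite.natEmbedding w n),
      b.orthonormal.comp _ (Infinite.natEmbedding w).injective⟩
  -- weights
  obtain ⟨c, hc, hsum⟩ : ∃ c : ℕ → ℝ, (∀ k, 0 < c k) ∧ HasSum c 1 :=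
    ⟨fun n => 1 / 2 / 2 ^ n, fun k => by positivity, hasSum_geometric_two' 1⟩
  have hc1 : ∀ k, c k ≤ 1 := fun k => le_hasSum hsum k fun j _ => (hc j).le
  have hc2 : ∀ k, 0 < c k ^ 2 := fun k => pow_pos (hc k) 2
  have h2 : Summable fun k => c k ^ 2 :=
    Summable.of_nonneg_of_le (fun k => (hc2 k).le)
      (fun k => by nlinarith [hc k, hc1 k]) hsum.summable
  have hξs : Summable fun k => (c k : ℂ) • e k := by
    refine Summable.of_norm_bounded hsum.summable fun k => ?_
    rw [norm_smul, he.1 k, Complex.norm_real, Real.norm_of_nonneg (hc k).le, mul_one]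
  obtain ⟨ξ, hξ⟩ := hξs
  have hξ0 : ξ ≠ 0 := by
    intro h0
    have g2 := (innerSL ℂ (e 0)).hasSum hξ
    have e2 : ⟪e 0, ξ⟫_ℂ = (c 0 : ℂ) := by
      refine g2.unique ?_
      convert hasSum_single 0 ?_ using 1
      · simp [he.1 0]
      · intro m hm
        simp [orthonormal_iff_ite.1 he 0 m, hm.symm]
    rw [h0, inner_zero_right] at e2
    exact (hc 0).ne' (by exact_mod_cast e2.symm)
  let f := wsum π he hsum.summable hc
  let g := wsum π he h2 hc2
  let p := om π ξ
  have hf : IsPosFnC f := wsum_pos _ _ _ _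
  have hg : IsPosFnC g := wsum_pos _ _ _ _
  have hp : IsPosFnC p := om_pos _ _
  have hpg : SingularC p g := singular_main hπ he hc hsum.summable h2 hc2 hξ hξ0
  have hp0 : p ≠ 0 := by
    intro h0
    apply hξ0
    apply rep_nondeg hπ
    intro a
    have h1 : p (star a * a) = _ := om_sq π ξ a
    rw [h0, LinearMap.zero_apply] at h1
    have h3 : ‖π a ξ‖ ^ 2 = 0 := by exact_mod_cast h1.symm
    simpa using h3
  -- partial sums
  let fn : ℕ → (A →ₗ[ℂ] ℂ) := fun n => ∑ k ∈ Finset.range (n + 1), (c k : ℂ) • om π (e k)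
  let α : ℕ → ℝ := fun n => ∑ k ∈ Finset.range (n + 1), (c k)⁻¹
  have hα : ∀ n, 0 < α n := fun n =>
    Finset.sum_pos (fun k _ => inv_pos.2 (hc k)) ⟨0, by simp⟩
  have hfn_sq : ∀ n a, fn n (star a * a) =
      ((∑ k ∈ Finset.range (n + 1), c k * ‖π a (e k)‖ ^ 2 : ℝ) : ℂ) := by
    intro n a
    simp only [fn, LinearMap.sum_apply, LinearMap.smul_apply, om_sq, smul_eq_mul]
    push_cast
    rfl
  have hfn_pos : ∀ n, IsPosFnC (fn n) := by
    intro n a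
    rw [hfn_sq]
    exact Complex.zero_le_real.2 (Finset.sum_nonneg fun k _ => mul_nonneg (hc k).le (by positivity))
  have hfn_g : ∀ n, FnLEC (fn n) ((α n : ℂ) • g) := by
    intro n a
    have h1 : HasSum _ (g (star a * a)) := wsum_hasSum π he h2 hc2 (star a * a)
    have h3 : (((∑ k ∈ Finset.range (n + 1), c k ^ 2 * ‖π a (e k)‖ ^ 2 : ℝ)) : ℂ)
        ≤ g (star a * a) := by
      have := sum_le_hasSum (Finset.range (n + 1)) (fun k _ =>
        mul_nonneg (Complex.zero_le_real.2 (hc2 k).le) (om_pos π (e k) a)) h1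
      refine le_trans (le_of_eq ?_) this
      simp only [om_sq]
      push_cast
      rfl
    have h4 : fn n (star a * a) ≤
        (α n : ℂ) * (((∑ k ∈ Finset.range (n + 1), c k ^ 2 * ‖π a (e k)‖ ^ 2 : ℝ)) : ℂ) := by
      rw [hfn_sq, ← Complex.ofReal_mul, Complex.real_le_real, Finset.mul_sum]
      refine Finset.sum_le_sum fun k hk => ?_
      have h5 : (c k)⁻¹ ≤ α n :=
        Finset.single_le_sum (f := fun k => (c k)⁻¹) (fun j _ => (inv_pos.2 (hc j)).le) hk
      have h6 : c k ≤ α n * c k ^ 2 := by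
        calc c k = (c k)⁻¹ * c k ^ 2 := by field_simp
          _ ≤ _ := mul_le_mul_of_nonneg_right h5 (hc2 k).le
      rw [← mul_assoc]
      exact mul_le_mul_of_nonneg_right h6 (by positivity)
    rw [LinearMap.sub_apply, LinearMap.smul_apply, smul_eq_mul, sub_nonneg]
    exact h4.trans (mul_le_mul_of_nonneg_left h3 (Complex.zero_le_real.2 (hα n).le))
  have hfn_lim : ∀ a, Filter.Tendsto (fun n => fn n a) Filter.atTop (nhds (f a)) := by
    intro a
    have h1 : HasSum _ (f a) := wsum_hasSum π he hsum.summable hc a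
    have h3 := (Filter.tendsto_add_atTop_iff_nat 1).2 h1.tendsto_sum_nat
    refine h3.congr fun n => ?_
    simp [fn, LinearMap.sum_apply]
  have hfg : AbsContC f g := by
    refine ⟨fn, α, hfn_pos, hα, ?_, hfn_g, hfn_lim⟩
    intro n a
    rw [LinearMap.sub_apply, hfn_sq, hfn_sq, ← Complex.ofReal_sub, Finset.sum_range_succ _ (n + 1),
      add_sub_cancel_left]
    exact Complex.zero_le_real.2 (mul_nonneg (hc _).le (by positivity))
  -- corrected partial sums
  let S : ℕ → ℝ := fun n => ∑ k ∈ Finset.range (n + 1), c k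
  let X : ℕ → H := fun n => ∑ k ∈ Finset.range (n + 1), (c k : ℂ) • e k
  have hS : ∀ n, 0 < S n := fun n => Finset.sum_pos (fun k _ => hc k) ⟨0, by simp⟩
  let r : ℕ → (A →ₗ[ℂ] ℂ) := fun n => fn n - (((S n)⁻¹ : ℝ) : ℂ) • om π (X n)
  let R : ℕ → A → ℝ := fun n a =>
    ∑ k ∈ Finset.range (n + 1), c k * ‖π a (e k)‖ ^ 2 - (S n)⁻¹ * ‖π a (X n)‖ ^ 2
  have hr_sq : ∀ n a, r n (star a * a) = (R n a : ℂ) := by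
    intro n a
    simp only [r, R, LinearMap.sub_apply, LinearMap.smul_apply, hfn_sq, om_sq, smul_eq_mul]
    push_cast
    rfl
  have hR_mono : ∀ n a, R n a ≤ R (n + 1) a := by
    intro n a
    have hX : X (n + 1) = X n + (c (n + 1) : ℂ) • e (n + 1) := Finset.sum_range_succ _ _
    have hS1 : S (n + 1) = S n + c (n + 1) := Finset.sum_range_succ _ _
    have hn : ‖π a (X (n + 1))‖ ≤ ‖π a (X n)‖ + c (n + 1) * ‖π a (e (n + 1))‖ := by
      rw [hX, map_add, map_smul]
      refine (norm_add_le _ _).trans ?_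
      rw [norm_smul, Complex.norm_real, Real.norm_of_nonneg (hc _).le]
    have ht := titu ‖π a (X n)‖ ‖π a (e (n + 1))‖ (S n) (c (n + 1)) (hS n) (hc _)
    have hm : (S (n + 1))⁻¹ * ‖π a (X (n + 1))‖ ^ 2 ≤
        (S n + c (n + 1))⁻¹ * (‖π a (X n)‖ + c (n + 1) * ‖π a (e (n + 1))‖) ^ 2 := by
      rw [← hS1]
      have := (hS (n + 1)).le
      gcongr
    simp only [R]
    rw [Finset.sum_range_succ _ (n + 1)]
    linarith
  have hR0 : ∀ a, R 0 a = 0 := by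
    intro a
    simp only [R, S, X, zero_add, Finset.sum_range_one, map_smul, norm_smul, Complex.norm_real,
      Real.norm_of_nonneg (hc 0).le]
    have := (hc 0).ne'
    field_simp
    ring
  have hR_pos : ∀ n a, 0 ≤ R n a := by
    intro n a
    rw [← hR0 a]
    exact monotone_nat_of_le_succ (f := fun n => R n a) (fun n => hR_mono n a) (Nat.zero_le n)
  have hr_lim : ∀ a, Filter.Tendsto (fun n => r n a) Filter.atTop (nhds ((f - p) a)) := by
    intro a
    have hSl : Filter.Tendsto S Filter.atTop (nhds 1) :=
      (Filter.tendsto_add_atTop_iff_nat 1).2 hsum.tendsto_sum_nat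
    have hXl : Filter.Tendsto X Filter.atTop (nhds ξ) :=
      (Filter.tendsto_add_atTop_iff_nat 1).2 hξ.tendsto_sum_nat
    have h1 : Filter.Tendsto (fun n => ⟪X n, π a (X n)⟫_ℂ) Filter.atTop
        (nhds ⟪ξ, π a ξ⟫_ℂ) := hXl.inner (((π a).continuous.tendsto ξ).comp hXl)
    have h3 : Filter.Tendsto (fun n => (((S n)⁻¹ : ℝ) : ℂ)) Filter.atTop (nhds ((1⁻¹ : ℝ) : ℂ)) :=
      (Complex.continuous_ofReal.tendsto _).comp (hSl.inv₀ one_ne_zero)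
    have h4 := (hfn_lim a).sub (h3.mul h1)
    simp only [inv_one, Complex.ofReal_one, one_mul] at h4
    exact h4
  have hr_pos : ∀ n, IsPosFnC (r n) := by
    intro n a
    rw [hr_sq]
    exact Complex.zero_le_real.2 (hR_pos n a)
  have hrpos : IsPosFnC (f - p) := by
    intro a
    exact ge_of_tendsto' (hr_lim _) fun n => hr_pos n a
  have hrg : AbsContC (f - p) g := by
    refine ⟨r, α, hr_pos, hα, ?_, ?_, hr_lim⟩
    · intro n a
      rw [LinearMap.sub_apply, hr_sq, hr_sq, sub_nonneg]
      exact Complex.real_le_real.2 (hR_mono n a)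
    · intro n a
      have h1 := hfn_g n a
      have h3 : r n (star a * a) ≤ fn n (star a * a) := by
        rw [hr_sq, hfn_sq, Complex.real_le_real]
        simp only [R]
        have : 0 ≤ (S n)⁻¹ * ‖π a (X n)‖ ^ 2 := mul_nonneg (inv_pos.2 (hS n)).le (by positivity)
        linarith
      rw [LinearMap.sub_apply, sub_nonneg] at h1 ⊢
      exact h3.trans h1
  have hpf : FnLEC p f := hrpos
  have hf0 : f ≠ 0 := by
    intro h0
    rw [h0] at hpf
    exact hp0 (fn_le_zero hp hpf)
  have hg0 : g ≠ 0 := by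
    intro h0
    apply hf0
    have hz : ∀ n, fn n = 0 := by
      intro n
      apply fn_le_zero (hfn_pos n)
      have := hfn_g n
      rwa [h0, smul_zero] at this
    ext a
    refine tendsto_nhds_unique (hfn_lim a) ?_
    simp [hz]
  refine ⟨fun hu => ?_, f, g, p, hf0, hg0, hp0, hf, hg, hp, hpf, hfg, hpg⟩
  have h0pos : IsPosFnC (0 : A →ₗ[ℂ] ℂ) := fun a => le_refl _
  have := hu f g hf hg f 0 (f - p) p
    ⟨hf, h0pos, by simp, hfg, fun q hq hq0 _ => fn_le_zero hq hq0⟩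
    ⟨hrpos, hp, by simp, hrg, hpg⟩
  exact hp0 this.2.symm
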